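/- Suppose Z̃ = L₁₁ Q₁, Ũ = L₂₁ Q₁ + L₂₂ Q₂, and Ỹ = L₃₁ Q₁ + L₃₂ Q₂ + L₃₃ Q₃, where L₁₁ ∈ ℝ^{q×q} and L₂₂ ∈ ℝ^{r×r} are invertible, L₂₁ ∈ ℝ^{r×q}, L₃₁ ∈ ℝ^{s×q}, L₃₂ ∈ ℝ^{s×r}, L₃₃ ∈ ℝ^{s×s}, and Q₁ ∈ ℝ^{q×n}, Q₂ ∈ ℝ^{r×n}, Q₃ ∈ ℝ^{s×n} satisfy Q_i Q_iᵀ = I and Q_i Q_jᵀ = 0 for i ≠ j. Then the vertical stack W of Z̃ and Ũ has full row rank, and Ỹ Wᵀ (W Wᵀ)^{−1} = [P_sbs F_sbs] with F_sbs = L₃₂ L₂₂^{−1} and P_sbs = (L₃₁ − F_sbs L₂₁) L₁₁^{−1}. -/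

import Mathlib

open Matrix Finset

/-!
With `Q = [Q₁; Q₂]` and `L = [L₁₁ 0; L₂₁ L₂₂]` the hypotheses say that `W = L Q` and
`Y = [L₃₁ L₃₂] Q + E`, where `Q Qᵀ = 1`, `E Qᵀ = 0` and `L` is invertible. So `W` inherits full
row rank from `Q`. Moreover `W Wᵀ = L Lᵀ`, hence `W† = Qᵀ L⁻¹` and
`Y W† = [L₃₁ L₃₂] L⁻¹`, which block inversion of `L` turns into `[P F]`.
-/

section

variable {R : Type*} [CommRing R]
variable {m m₁ m₂ n p k : Type*}

section Pseudoinverse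

variable [Fintype m] [DecidableEq m] [Fintype n]

theorem rank_eq_card_of_mul_eq_one [Nontrivial R] {A : Matrix m n R} {B : Matrix n m R}
    (h : A * B = 1) : A.rank = Fintype.card m := by
  refine A.rank_le_card_height.antisymm ?_
  calc Fintype.card m = (A * B).rank := by rw [h, rank_one]
    _ ≤ A.rank := rank_mul_le_left A B

/-- The pseudoinverse `W† = Wᵀ (W Wᵀ)⁻¹` of a matrix of full row rank. If `W Wᵀ` is not invertible,
the nonsingular inverse makes this `0`, not the Moore–Penrose inverse. -/
noncomputable def rightPinv (W : Matrix m n R) : Matrix n m R :=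
  Wᵀ * (W * Wᵀ)⁻¹

theorem rightPinv_mul_of_isUnit {L : Matrix m m R} {Q : Matrix m n R}
    (hL : IsUnit L) (hQ : Q * Qᵀ = 1) : rightPinv (L * Q) = Qᵀ * L⁻¹ := by
  have hLT : IsUnit Lᵀ.det := (isUnit_iff_isUnit_det _).1 ((isUnit_transpose L).2 hL)
  have gram : L * Q * (L * Q)ᵀ = L * Lᵀ := by
    rw [transpose_mul, Matrix.mul_assoc, ← Matrix.mul_assoc Q, hQ, Matrix.one_mul]
  calc rightPinv (L * Q) = Qᵀ * Lᵀ * (Lᵀ⁻¹ * L⁻¹) := by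
        rw [rightPinv, gram, Matrix.mul_inv_rev, transpose_mul]
    _ = Qᵀ * L⁻¹ := by
        rw [Matrix.mul_assoc, mul_nonsing_inv_cancel_left _ _ hLT]

theorem add_mul_rightPinv_mul {L : Matrix m m R} {Q : Matrix m n R} {M : Matrix p m R}
    {E : Matrix p n R} (hL : IsUnit L) (hQ : Q * Qᵀ = 1) (hE : E * Qᵀ = 0) :
    (M * Q + E) * rightPinv (L * Q) = M * L⁻¹ := by
  rw [rightPinv_mul_of_isUnit hL hQ, ← Matrix.mul_assoc, Matrix.add_mul, hE, add_zero,
    Matrix.mul_assoc M, hQ, Matrix.mul_one]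

end Pseudoinverse

variable [DecidableEq m₁] [DecidableEq m₂]

theorem fromRows_mul_transpose_self_eq_one [Fintype n]
    {Q₁ : Matrix m₁ n R} {Q₂ : Matrix m₂ n R}
    (h₁ : Q₁ * Q₁ᵀ = 1) (h₂ : Q₂ * Q₂ᵀ = 1) (h₁₂ : Q₁ * Q₂ᵀ = 0) :
    fromRows Q₁ Q₂ * (fromRows Q₁ Q₂)ᵀ = 1 := by
  have h₂₁ : Q₂ * Q₁ᵀ = 0 := by simpa using congrArg transpose h₁₂
  rw [transpose_fromRows, fromRows_mul_fromCols, h₁, h₁₂, h₂₁, h₂, fromBlocks_one]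

variable [Fintype m₁] [Fintype m₂]

theorem fromCols_mul_inv_fromBlocks_zero₁₂ (A : Matrix m₁ m₁ R) (C : Matrix m₂ m₁ R)
    (D : Matrix m₂ m₂ R) (hAD : IsUnit A ↔ IsUnit D) (M₁ : Matrix p m₁ R) (M₂ : Matrix p m₂ R) :
    fromCols M₁ M₂ * (fromBlocks A 0 C D)⁻¹ =
      fromCols ((M₁ - M₂ * D⁻¹ * C) * A⁻¹) (M₂ * D⁻¹) := by
  rw [inv_fromBlocks_zero₁₂_of_isUnit_iff A C D hAD, fromCols_mul_fromBlocks]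
  simp only [Matrix.mul_zero, zero_add, Matrix.mul_neg, Matrix.sub_mul, Matrix.mul_assoc,
    ← sub_eq_add_neg]

theorem subspace_predictor_from_LQ_general [Nontrivial R] [Fintype n] [Fintype k]
    (L11 : Matrix m₁ m₁ R) (L21 : Matrix m₂ m₁ R) (L22 : Matrix m₂ m₂ R)
    (L31 : Matrix p m₁ R) (L32 : Matrix p m₂ R) (L33 : Matrix p k R)
    (Q1 : Matrix m₁ n R) (Q2 : Matrix m₂ n R) (Q3 : Matrix k n R)
    (hL11 : IsUnit L11) (hL22 : IsUnit L22)
    (hQ11 : Q1 * Q1ᵀ = 1) (hQ22 : Q2 * Q2ᵀ = 1) (hQ12 : Q1 * Q2ᵀ = 0)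
    (hQ31 : Q3 * Q1ᵀ = 0) (hQ32 : Q3 * Q2ᵀ = 0)
    (Z : Matrix m₁ n R) (U : Matrix m₂ n R) (Y : Matrix p n R)
    (hZ : Z = L11 * Q1) (hU : U = L21 * Q1 + L22 * Q2)
    (hY : Y = L31 * Q1 + L32 * Q2 + L33 * Q3) :
    letI W := fromRows Z U
    letI Fsbs := L32 * L22⁻¹
    letI Psbs := (L31 - Fsbs * L21) * L11⁻¹
    (W.rank = Fintype.card m₁ + Fintype.card m₂ ∧
      Y * Wᵀ * (W * Wᵀ)⁻¹ = fromCols Psbs Fsbs) := by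
  let L := fromBlocks L11 0 L21 L22
  let Q := fromRows Q1 Q2
  have hL : IsUnit L := isUnit_fromBlocks_zero₁₂.2 ⟨hL11, hL22⟩
  have hQ : Q * Qᵀ = 1 := fromRows_mul_transpose_self_eq_one hQ11 hQ22 hQ12
  have hE : L33 * Q3 * Qᵀ = 0 := by
    rw [transpose_fromRows, mul_fromCols, Matrix.mul_assoc, Matrix.mul_assoc, hQ31, hQ32,
      Matrix.mul_zero, Matrix.mul_zero, fromCols_zero]
  have hW : fromRows Z U = L * Q := by
    rw [fromBlocks_mul_fromRows, hZ, hU, Matrix.zero_mul, add_zero]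
  have hYQ : Y = fromCols L31 L32 * Q + L33 * Q3 := by rw [fromCols_mul_fromRows, hY]
  constructor
  · rw [hW, rank_mul_eq_right_of_isUnit_det _ _ ((isUnit_iff_isUnit_det L).1 hL),
      rank_eq_card_of_mul_eq_one hQ, Fintype.card_sum]
  · calc Y * (fromRows Z U)ᵀ * (fromRows Z U * (fromRows Z U)ᵀ)⁻¹
        = (fromCols L31 L32 * Q + L33 * Q3) * rightPinv (L * Q) := by
          rw [hW, hYQ, Matrix.mul_assoc, rightPinv]
      _ = fromCols L31 L32 * L⁻¹ := add_mul_rightPinv_mul hL hQ hE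
      _ = fromCols ((L31 - L32 * L22⁻¹ * L21) * L11⁻¹) (L32 * L22⁻¹) :=
          fromCols_mul_inv_fromBlocks_zero₁₂ L11 L21 L22 (iff_of_true hL11 hL22) L31 L32

end

/-- Given an LQ decomposition `Z̃ = L₁₁Q₁`, `Ũ = L₂₁Q₁ + L₂₂Q₂`,
`Ỹ = L₃₁Q₁ + L₃₂Q₂ + L₃₃Q₃` with `L₁₁, L₂₂` invertible and the `Q_i` having orthonormal rows
with mutually orthogonal row spaces, the stack `W = [Z̃; Ũ]` has full row rank and
`Ỹ Wᵀ (W Wᵀ)⁻¹ = [P_sbs  F_sbs]` with `F_sbs = L₃₂ L₂₂⁻¹` and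
`P_sbs = (L₃₁ − F_sbs L₂₁) L₁₁⁻¹`. -/
theorem subspace_predictor_from_LQ
    (q r s n : ℕ) (hq : 0 < q) (hr : 0 < r) (hs : 0 < s) (hn : 0 < n) (hqrsn : q + r + s ≤ n)
    (L11 : Matrix (Fin q) (Fin q) ℝ) (L21 : Matrix (Fin r) (Fin q) ℝ)
    (L22 : Matrix (Fin r) (Fin r) ℝ) (L31 : Matrix (Fin s) (Fin q) ℝ)
    (L32 : Matrix (Fin s) (Fin r) ℝ) (L33 : Matrix (Fin s) (Fin s) ℝ)
    (Q1 : Matrix (Fin q) (Fin n) ℝ) (Q2 : Matrix (Fin r) (Fin n) ℝ)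
    (Q3 : Matrix (Fin s) (Fin n) ℝ)
    (hL11 : IsUnit L11) (hL22 : IsUnit L22)
    (hQ11 : Q1 * Q1ᵀ = 1) (hQ22 : Q2 * Q2ᵀ = 1) (hQ33 : Q3 * Q3ᵀ = 1)
    (hQ12 : Q1 * Q2ᵀ = 0) (hQ13 : Q1 * Q3ᵀ = 0) (hQ23 : Q2 * Q3ᵀ = 0)
    (hQ21 : Q2 * Q1ᵀ = 0) (hQ31 : Q3 * Q1ᵀ = 0) (hQ32 : Q3 * Q2ᵀ = 0)
    (Z : Matrix (Fin q) (Fin n) ℝ) (U : Matrix (Fin r) (Fin n) ℝ)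
    (Y : Matrix (Fin s) (Fin n) ℝ)
    (hZ : Z = L11 * Q1) (hU : U = L21 * Q1 + L22 * Q2)
    (hY : Y = L31 * Q1 + L32 * Q2 + L33 * Q3) :
    letI W := Matrix.fromRows Z U
    letI Fsbs := L32 * L22⁻¹
    letI Psbs := (L31 - Fsbs * L21) * L11⁻¹
    (W.rank = q + r ∧
      Y * Wᵀ * (W * Wᵀ)⁻¹ = Matrix.fromCols Psbs Fsbs) := by
  simpa only [Fintype.card_fin] using
    subspace_predictor_from_LQ_general L11 L21 L22 L31 L32 L33 Q1 Q2 Q3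
      hL11 hL22 hQ11 hQ22 hQ12 hQ31 hQ32 Z U Y hZ hU hY
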